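/- arXiv:math/0211387 — 3 statements merged into one kernel-verified Lean document; each statement's English description precedes it below -/
import Mathlib

section
/- Let τ ∈ [0,1] and n ≥ 1. The urn measure m_n decomposes as the mixture m_n = Σ_π p_τ(π) · λ_π, the sum being over all partitions π of {1,…,n}, where p_τ is the Ewens weight and λ_π is the pushforward of the product measure λ^{⊗(blocks of π)} under the diagonal-filling map φ_π. -/
open MeasureTheory

noncomputable section

/-- The circle `ℝ/ℤ`. -/
abbrev Circle1 : Type := AddCircle (1 : ℝ)

/-- The Pólya-urn type Markov kernel
`κ_n(x, ·) = ((1−τ)·λ + τ·Σ_{i=1}^n δ_{x_i}) / ((1−τ) + nτ)`. -/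
def urnKernel (τ : ℝ) {n : ℕ} (x : Fin n → Circle1) : Measure Circle1 :=
  (ENNReal.ofReal ((1 - τ) + n * τ))⁻¹ •
    (ENNReal.ofReal (1 - τ) • (volume : Measure Circle1)
      + ENNReal.ofReal τ • ∑ i : Fin n, Measure.dirac (x i))

/-- The urn measures: `m 1 = λ` and `m (n+1)` is the image of the measure–kernel
product `m n ⊗ κ_n` under `(x, y) ↦ (x_1, …, x_n, y)`.  (`m 0` is a dummy value.) -/
def urnMeasure (τ : ℝ) : (n : ℕ) → Measure (Fin n → Circle1)
  | 0 => Measure.dirac (fun i => i.elim0)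
  | 1 => (volume : Measure Circle1).map (fun y => fun _ : Fin 1 => y)
  | (n + 2) =>
      (urnMeasure τ (n + 1)).bind
        (fun x => (urnKernel τ x).map (Fin.snoc x))

/-- For a partition `π` of `{1,…,n}`, the set `A_π` of `x` with `x i = x j` iff `i`
and `j` lie in the same block of `π`. -/
def samePartSet {n : ℕ} (P : Finpartition (Finset.univ : Finset (Fin n))) :
    Set (Fin n → Circle1) :=
  {x | ∀ i j : Fin n, x i = x j ↔ ∃ B ∈ P.parts, i ∈ B ∧ j ∈ B}

/-- The Ewens weight of a partition `π` of `{1,…,n}` with `k` blocks of sizes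
`n_1,…,n_k`:
`p_τ(π) = (1−τ)^{k−1} · τ^{n−k} · ∏_i (n_i − 1)! / ∏_{j=1}^{n−1}((1−τ)+jτ)`. -/
def ewens (τ : ℝ) (n : ℕ) (P : Finpartition (Finset.univ : Finset (Fin n))) : ℝ :=
  ((1 - τ) ^ (P.parts.card - 1) * τ ^ (n - P.parts.card) *
    ∏ B ∈ P.parts, ((B.card - 1).factorial : ℝ)) /
    ∏ j ∈ Finset.Icc 1 (n - 1), ((1 - τ) + (j : ℝ) * τ)

/-- `λ_π`: the pushforward of the product measure `λ^{⊗ B(π)}` (one factor for each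
block of `π`) under the diagonal-filling map `φ_π`, `(φ_π y)_i = y(B)` for `i ∈ B`. -/
def lambdaPart {n : ℕ} (lam : Measure Circle1)
    (P : Finpartition (Finset.univ : Finset (Fin n))) : Measure (Fin n → Circle1) :=
  (Measure.pi (fun _ : P.parts => lam)).map
    (fun y i => y ⟨P.part i, P.part_mem.2 (Finset.mem_univ i)⟩)

section UrnHelpers

/-- The block of `i`, as an element of the subtype of blocks. -/
def blk {n : ℕ} (P : Finpartition (Finset.univ : Finset (Fin n))) (i : Fin n) : P.parts :=
  ⟨P.part i, P.part_mem.2 (Finset.mem_univ i)⟩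

lemma blk_eq {n : ℕ} (P : Finpartition (Finset.univ : Finset (Fin n))) (i : Fin n) (B : P.parts) :
    blk P i = B ↔ i ∈ B.1 := by
  rw [← P.part_eq_iff_mem B.2, Subtype.ext_iff]; rfl

lemma blk_surj {n : ℕ} (P : Finpartition (Finset.univ : Finset (Fin n))) :
    Function.Surjective (blk P) := by
  intro B
  obtain ⟨i, hi⟩ := P.nonempty_of_mem_parts B.2
  exact ⟨i, (blk_eq P i B).2 hi⟩

lemma finpart_ext {n : ℕ} {P Q : Finpartition (Finset.univ : Finset (Fin n))}
    (h : ∀ i j, blk P i = blk P j ↔ blk Q i = blk Q j) : P = Q := by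
  have hp : ∀ i, P.part i = Q.part i := by
    intro i
    ext j
    have h1 := h j i
    rw [blk_eq, blk_eq] at h1
    exact h1
  ext B
  constructor
  · intro hB
    obtain ⟨i, hi⟩ := P.nonempty_of_mem_parts hB
    rw [← P.part_eq_of_mem hB hi, hp]
    exact Q.part_mem.2 (Finset.mem_univ i)
  · intro hB
    obtain ⟨i, hi⟩ := Q.nonempty_of_mem_parts hB
    rw [← Q.part_eq_of_mem hB hi, ← hp]
    exact P.part_mem.2 (Finset.mem_univ i)

open Classical in
/-- The partition into fibers of `f`. -/
def kerPart {n : ℕ} {β : Type} (f : Fin n → β) : Finpartition (Finset.univ : Finset (Fin n)) :=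
  Finpartition.ofSetoid (Setoid.ker f)

lemma blk_kerPart {n : ℕ} {β : Type} (f : Fin n → β) (i j : Fin n) :
    blk (kerPart f) i = blk (kerPart f) j ↔ f i = f j := by
  classical
  rw [blk_eq]
  unfold kerPart blk
  rw [Finpartition.mem_part_ofSetoid_iff_rel, Setoid.ker_def]
  exact eq_comm

/-- A surjection with fibers the blocks of `P` identifies its target with the blocks. -/
lemma exists_equiv {n : ℕ} {β : Type} (P : Finpartition (Finset.univ : Finset (Fin n)))
    (f : Fin n → β) (hf : Function.Surjective f)
    (h : ∀ i j, blk P i = blk P j ↔ f i = f j) :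
    ∃ e : β ≃ P.parts, ∀ i, e (f i) = blk P i := by
  choose g hg using hf
  have key : ∀ i, blk P (g (f i)) = blk P i := fun i => (h _ _).2 (hg _)
  refine ⟨Equiv.ofBijective (fun b => blk P (g b)) ⟨?_, ?_⟩, key⟩
  · intro a b hab
    have := (h _ _).1 hab
    rwa [hg, hg] at this
  · intro B
    obtain ⟨i, rfl⟩ := blk_surj P B
    exact ⟨f i, key i⟩

lemma lambdaPart_eq {n : ℕ} {β : Type} [Fintype β]
    (P : Finpartition (Finset.univ : Finset (Fin n)))
    (f : Fin n → β) (hf : Function.Surjective f)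
    (h : ∀ i j, blk P i = blk P j ↔ f i = f j) :
    lambdaPart volume P
      = (Measure.pi (fun _ : β => (volume : Measure Circle1))).map (fun y i => y (f i)) := by
  obtain ⟨e, he⟩ := exists_equiv P f hf h
  have hm := (measurePreserving_piCongrLeft
    (fun _ : P.parts => (volume : Measure Circle1)) e).map_eq
  unfold lambdaPart
  rw [← hm, Measure.map_map (by fun_prop) (by fun_prop)]
  congr 1
  funext y i
  have := MeasurableEquiv.piCongrLeft_apply_apply e (β := fun _ => Circle1) y (f i)
  rw [he] at this
  exact this

lemma card_prod_eq {n : ℕ} {β : Type} [Fintype β] [DecidableEq β]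
    (P : Finpartition (Finset.univ : Finset (Fin n)))
    (f : Fin n → β) (hf : Function.Surjective f)
    (h : ∀ i j, blk P i = blk P j ↔ f i = f j) :
    P.parts.card = Fintype.card β ∧
      ∏ B ∈ P.parts, ((B.card - 1).factorial : ℝ)
        = ∏ b : β, (((Finset.univ.filter (fun i => f i = b)).card - 1).factorial : ℝ) := by
  obtain ⟨e, he⟩ := exists_equiv P f hf h
  constructor
  · rw [Fintype.card_congr e, Fintype.card_coe]
  · rw [← Finset.prod_coe_sort, ← e.prod_comp]
    refine Finset.prod_congr rfl fun b _ => ?_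
    have : ((e b).1 : Finset (Fin n)) = Finset.univ.filter (fun i => f i = b) := by
      ext i
      rw [← blk_eq, ← he, e.injective.eq_iff]
      simp
    rw [this]

/-- The label function of the extended partition. -/
def extFun {n : ℕ} (P : Finpartition (Finset.univ : Finset (Fin n))) (o : Option P.parts) :
    Fin (n + 1) → Option P.parts :=
  Fin.snoc (α := fun _ => Option P.parts) (fun i => some (blk P i)) o

/-- The partition of `Fin (n+1)` obtained from `P` by putting the last element in a block. -/
def extPart {n : ℕ} (P : Finpartition (Finset.univ : Finset (Fin n))) (o : Option P.parts) :
    Finpartition (Finset.univ : Finset (Fin (n + 1))) :=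
  kerPart (extFun P o)

@[simp] lemma extFun_castSucc {n : ℕ} (P : Finpartition (Finset.univ : Finset (Fin n)))
    (o : Option P.parts) (i : Fin n) : extFun P o i.castSucc = some (blk P i) := by
  simp [extFun]

@[simp] lemma extFun_last {n : ℕ} (P : Finpartition (Finset.univ : Finset (Fin n)))
    (o : Option P.parts) : extFun P o (Fin.last n) = o := by
  simp [extFun]

lemma extPart_bij {n : ℕ} : Function.Bijective
    (fun p : (Σ P : Finpartition (Finset.univ : Finset (Fin n)), Option P.parts) =>
      extPart p.1 p.2) := by
  constructor
  · rintro ⟨P, o⟩ ⟨P', o'⟩ h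
    have hrel : ∀ i j, extFun P o i = extFun P o j ↔ extFun P' o' i = extFun P' o' j := by
      intro i j
      have h' : extPart P o = extPart P' o' := h
      rw [← blk_kerPart (extFun P o), ← blk_kerPart (extFun P' o')]
      change blk (extPart P o) i = blk (extPart P o) j ↔ _
      rw [h']; rfl
    have hP : P = P' := by
      apply finpart_ext
      intro i j
      simpa using hrel i.castSucc j.castSucc
    subst hP
    have ho : o = o' := by
      ext B
      obtain ⟨i, rfl⟩ := blk_surj P B
      simpa using hrel (Fin.last n) i.castSucc
    rw [ho]
  · intro Q
    classical
    let P := kerPart (fun i : Fin n => blk Q i.castSucc)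
    let o : Option P.parts :=
      if h : ∃ i : Fin n, blk Q i.castSucc = blk Q (Fin.last n) then some (blk P h.choose) else none
    have hP : ∀ i j, blk P i = blk P j ↔ blk Q i.castSucc = blk Q j.castSucc :=
      fun i j => blk_kerPart _ i j
    have ho : ∀ j, some (blk P j) = o ↔ blk Q j.castSucc = blk Q (Fin.last n) := by
      intro j
      by_cases h : ∃ i : Fin n, blk Q i.castSucc = blk Q (Fin.last n)
      · simp only [o, dif_pos h, Option.some.injEq]
        rw [hP, h.choose_spec]
      · simp only [o, dif_neg h, reduceCtorEq, false_iff]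
        exact fun hj => h ⟨j, hj⟩
    refine ⟨⟨P, o⟩, ?_⟩
    apply finpart_ext
    intro i j
    change blk (kerPart (extFun P o)) i = blk (kerPart (extFun P o)) j ↔ _
    rw [blk_kerPart]
    induction i using Fin.lastCases with
    | last =>
      induction j using Fin.lastCases with
      | last => simp
      | cast j => 
        rw [extFun_last, extFun_castSucc, eq_comm, ho, eq_comm]
    | cast i =>
      induction j using Fin.lastCases with
      | last => rw [extFun_last, extFun_castSucc, ho]
      | cast j => simp [hP]

lemma sum_extPart {n : ℕ} {M : Type*} [AddCommMonoid M]
    (F : Finpartition (Finset.univ : Finset (Fin (n + 1))) → M) :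
    ∑ Q, F Q = ∑ P : Finpartition (Finset.univ : Finset (Fin n)),
      (F (extPart P none) + ∑ B : P.parts, F (extPart P (some B))) := by
  rw [← (Equiv.ofBijective _ (extPart_bij (n := n))).sum_comp, Fintype.sum_sigma]
  refine Finset.sum_congr rfl fun P _ => ?_
  rw [Fintype.sum_option]
  rfl

lemma extFun_none_surj {n : ℕ} (P : Finpartition (Finset.univ : Finset (Fin n))) :
    Function.Surjective (extFun P none) := by
  rintro (_ | B)
  · exact ⟨Fin.last n, by simp⟩
  · obtain ⟨i, rfl⟩ := blk_surj P B
    exact ⟨i.castSucc, by simp⟩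

/-- Label function for an extension into an existing block. -/
def extFun' {n : ℕ} (P : Finpartition (Finset.univ : Finset (Fin n))) (B : P.parts) :
    Fin (n + 1) → P.parts :=
  Fin.snoc (α := fun _ => P.parts) (blk P) B

@[simp] lemma extFun'_castSucc {n : ℕ} (P : Finpartition (Finset.univ : Finset (Fin n)))
    (o : P.parts) (i : Fin n) : extFun' P o i.castSucc = blk P i := by
  simp [extFun']

@[simp] lemma extFun'_last {n : ℕ} (P : Finpartition (Finset.univ : Finset (Fin n)))
    (o : P.parts) : extFun' P o (Fin.last n) = o := by
  simp [extFun']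

lemma extFun_some {n : ℕ} (P : Finpartition (Finset.univ : Finset (Fin n))) (B : P.parts)
    (i : Fin (n + 1)) : extFun P (some B) i = some (extFun' P B i) := by
  induction i using Fin.lastCases <;> simp

lemma extFun'_surj {n : ℕ} (P : Finpartition (Finset.univ : Finset (Fin n))) (B : P.parts) :
    Function.Surjective (extFun' P B) := by
  intro C
  obtain ⟨i, rfl⟩ := blk_surj P C
  exact ⟨i.castSucc, by simp⟩

lemma extPart_none_rel {n : ℕ} (P : Finpartition (Finset.univ : Finset (Fin n)))
    (i j : Fin (n + 1)) : blk (extPart P none) i = blk (extPart P none) j ↔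
      extFun P none i = extFun P none j := blk_kerPart _ i j

lemma extPart_some_rel {n : ℕ} (P : Finpartition (Finset.univ : Finset (Fin n))) (B : P.parts)
    (i j : Fin (n + 1)) : blk (extPart P (some B)) i = blk (extPart P (some B)) j ↔
      extFun' P B i = extFun' P B j := by
  refine (blk_kerPart _ i j).trans ?_
  rw [extFun_some, extFun_some, Option.some.injEq]

lemma card_fiber_succ {n : ℕ} {β : Type} [DecidableEq β] (f : Fin (n + 1) → β) (b : β) :
    (Finset.univ.filter (fun i => f i = b)).card
      = (Finset.univ.filter (fun i : Fin n => f i.castSucc = b)).card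
        + if f (Fin.last n) = b then 1 else 0 := by
  simp only [Finset.card_filter]
  rw [Fin.sum_univ_castSucc]

lemma filter_blk {n : ℕ} (P : Finpartition (Finset.univ : Finset (Fin n))) (B : P.parts) :
    Finset.univ.filter (fun i : Fin n => blk P i = B) = B.1 := by
  ext i; simp [blk_eq]

lemma denom_succ (τ : ℝ) {n : ℕ} (hn : 1 ≤ n) :
    ∏ j ∈ Finset.Icc 1 n, ((1 - τ) + (j : ℝ) * τ)
      = (∏ j ∈ Finset.Icc 1 (n - 1), ((1 - τ) + (j : ℝ) * τ)) * ((1 - τ) + n * τ) := by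
  obtain ⟨m, rfl⟩ : ∃ m, n = m + 1 := ⟨n - 1, by omega⟩
  rw [Finset.prod_Icc_succ_top (by omega)]
  simp

lemma parts_card_pos {n : ℕ} (hn : 1 ≤ n) (P : Finpartition (Finset.univ : Finset (Fin n))) :
    1 ≤ P.parts.card :=
  Finset.card_pos.2 ⟨_, (blk P ⟨0, hn⟩).2⟩

lemma parts_card_le {n : ℕ} (P : Finpartition (Finset.univ : Finset (Fin n))) :
    P.parts.card ≤ n := by
  simpa using P.card_parts_le_card

lemma ewens_none (τ : ℝ) {n : ℕ} (hn : 1 ≤ n)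
    (P : Finpartition (Finset.univ : Finset (Fin n))) :
    ewens τ (n + 1) (extPart P none) = ewens τ n P * (1 - τ) / ((1 - τ) + n * τ) := by
  classical
  obtain ⟨hc, hp⟩ := card_prod_eq (extPart P none) _ (extFun_none_surj P) (extPart_none_rel P)
  have hprod : ∏ B ∈ (extPart P none).parts, ((B.card - 1).factorial : ℝ)
      = ∏ B ∈ P.parts, ((B.card - 1).factorial : ℝ) := by
    rw [hp, Fintype.prod_option, ← Finset.prod_coe_sort P.parts]
    simp [card_fiber_succ, filter_blk]
  rw [Fintype.card_option, Fintype.card_coe] at hc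
  have h1 := parts_card_pos hn P
  unfold ewens
  rw [hprod, hc, Nat.add_sub_cancel, Nat.add_sub_cancel, denom_succ τ hn,
    Nat.add_sub_add_right]
  obtain ⟨k, hk⟩ : ∃ k, P.parts.card = k + 1 := ⟨P.parts.card - 1, by omega⟩
  rw [hk, Nat.add_sub_cancel, pow_succ]
  rw [div_mul_eq_mul_div, div_div]
  congr 1
  ring

lemma ewens_some (τ : ℝ) {n : ℕ} (hn : 1 ≤ n)
    (P : Finpartition (Finset.univ : Finset (Fin n))) (B : P.parts) :
    ewens τ (n + 1) (extPart P (some B))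
      = ewens τ n P * (τ * B.1.card) / ((1 - τ) + n * τ) := by
  classical
  obtain ⟨hc, hp⟩ := card_prod_eq (extPart P (some B)) _ (extFun'_surj P B) (extPart_some_rel P B)
  have hprod : ∏ B ∈ (extPart P (some B)).parts, ((B.card - 1).factorial : ℝ)
      = (∏ B ∈ P.parts, ((B.card - 1).factorial : ℝ)) * B.1.card := by
    rw [hp, ← Finset.prod_coe_sort P.parts,
      ← Finset.mul_prod_erase _ _ (Finset.mem_univ B),
      ← Finset.mul_prod_erase (Finset.univ : Finset P.parts) _ (Finset.mem_univ B)]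
    have hB : 1 ≤ B.1.card := Finset.card_pos.2 (P.nonempty_of_mem_parts B.2)
    have : ∏ C ∈ Finset.univ.erase B,
        (((Finset.univ.filter (fun i => extFun' P B i = C)).card - 1).factorial : ℝ)
        = ∏ C ∈ Finset.univ.erase B, ((C.1.card - 1).factorial : ℝ) := by
      refine Finset.prod_congr rfl fun C hC => ?_
      have hne : B ≠ C := (Finset.ne_of_mem_erase hC).symm
      simp [card_fiber_succ, filter_blk, hne]
    rw [this]
    have h2 : ((B.1.card).factorial : ℝ) = B.1.card * ((B.1.card - 1).factorial : ℝ) := by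
      exact_mod_cast (Nat.mul_factorial_pred (by omega)).symm
    simp only [card_fiber_succ, extFun'_castSucc, filter_blk, extFun'_last, if_true,
      Nat.add_sub_cancel, h2]
    ring
  rw [Fintype.card_coe] at hc
  have h1 := parts_card_le P
  unfold ewens
  rw [hprod, hc, Nat.add_sub_cancel, denom_succ τ hn, Nat.succ_sub h1, pow_succ]
  rw [div_mul_eq_mul_div, div_div]
  congr 1
  ring

lemma measurable_snoc_pair {n : ℕ} :
    Measurable (fun p : (Fin n → Circle1) × Circle1 =>
      (Fin.snoc p.1 p.2 : Fin (n + 1) → Circle1)) := by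
  rw [measurable_pi_iff]
  intro i
  induction i using Fin.lastCases with
  | last => simpa using measurable_snd
  | cast i =>
    simp only [Fin.snoc_castSucc]
    fun_prop

lemma measurable_snoc_right {n : ℕ} (x : Fin n → Circle1) :
    Measurable (Fin.snoc (α := fun _ => Circle1) x : Circle1 → Fin (n + 1) → Circle1) :=
  measurable_snoc_pair.comp (measurable_const.prodMk measurable_id)

lemma measurable_snoc_self {n : ℕ} (i : Fin n) :
    Measurable (fun x : Fin n → Circle1 => (Fin.snoc x (x i) : Fin (n + 1) → Circle1)) :=
  measurable_snoc_pair.comp (measurable_id.prodMk (measurable_pi_apply i))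

lemma lambda_none {n : ℕ} (P : Finpartition (Finset.univ : Finset (Fin n)))
    {s : Set (Fin (n + 1) → Circle1)} (hs : MeasurableSet s) :
    ∫⁻ x, (volume : Measure Circle1) (Fin.snoc (α := fun _ => Circle1) x ⁻¹' s) ∂(lambdaPart volume P)
      = lambdaPart volume (extPart P none) s := by
  have hs' := measurable_snoc_pair hs
  rw [lambdaPart_eq (extPart P none) _ (extFun_none_surj P) (extPart_none_rel P)]
  have hpi : Measure.pi (fun _ : Option P.parts => (volume : Measure Circle1))
      = ((Measure.pi (fun _ : P.parts => (volume : Measure Circle1))).prod volume).map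
        (fun p o => o.elim p.2 p.1) := by
    rw [← Measure.pi_map_piOptionEquivProd]
    congr 1
    funext p o
    cases o <;> rfl
  have hmeas : Measurable (fun (p : (P.parts → Circle1) × Circle1) (o : Option P.parts) =>
      o.elim p.2 p.1) := by
    rw [measurable_pi_iff]
    rintro (_ | B)
    · exact measurable_snd
    · exact (measurable_pi_apply B).comp measurable_fst
  have hm2 : Measurable fun (y : P.parts → Circle1) (i : Fin n) => y (blk P i) := by fun_prop
  have hm3 : Measurable fun (y : Option P.parts → Circle1) (i : Fin (n+1)) =>
    y (extFun P none i) := by fun_prop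
  rw [hpi, Measure.map_map hm3 hmeas, Measure.map_apply (hm3.comp hmeas) hs,
    Measure.prod_apply ((hm3.comp hmeas) hs)]
  unfold lambdaPart
  refine (lintegral_map (measurable_measure_prodMk_left hs') hm2).trans ?_
  refine lintegral_congr fun y => ?_
  congr 1
  ext z
  simp only [Set.mem_preimage, Function.comp]
  have : (Fin.snoc (fun i => y (blk P i)) z : Fin (n + 1) → Circle1)
      = fun i => (extFun P none i).elim z y := by
    funext i
    induction i using Fin.lastCases <;> simp
  exact iff_of_eq (congrArg (· ∈ s) this)

lemma lambda_some {n : ℕ} (P : Finpartition (Finset.univ : Finset (Fin n))) (i : Fin n) :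
    (lambdaPart volume P).map (fun x => (Fin.snoc x (x i) : Fin (n + 1) → Circle1))
      = lambdaPart volume (extPart P (some (blk P i))) := by
  rw [lambdaPart_eq (extPart P _) _ (extFun'_surj P _) (extPart_some_rel P _)]
  have hm2 : Measurable fun (y : P.parts → Circle1) (i : Fin n) => y (blk P i) := by fun_prop
  refine (Measure.map_map (measurable_snoc_self i) hm2).trans ?_
  congr 1
  funext y j
  induction j using Fin.lastCases <;> simp

lemma kernel_apply (τ : ℝ) {n : ℕ} (x : Fin n → Circle1)
    {s : Set (Fin (n + 1) → Circle1)} (hs : MeasurableSet s) :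
    (urnKernel τ x).map (Fin.snoc (α := fun _ => Circle1) x) s
      = (ENNReal.ofReal ((1 - τ) + n * τ))⁻¹ * (ENNReal.ofReal (1 - τ) *
          (volume : Measure Circle1) (Fin.snoc (α := fun _ => Circle1) x ⁻¹' s)
        + ENNReal.ofReal τ * ∑ i : Fin n,
          s.indicator (1 : (Fin (n + 1) → Circle1) → ENNReal) (Fin.snoc x (x i) : Fin (n + 1) → Circle1)) := by
  rw [Measure.map_apply (measurable_snoc_right x) hs]
  unfold urnKernel
  have hs' := measurable_snoc_right x hs
  simp only [Measure.smul_apply, Measure.add_apply, Measure.finsetSum_apply, smul_eq_mul,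
    Measure.dirac_apply' _ hs']
  rfl

lemma meas_vol {n : ℕ} {s : Set (Fin (n + 1) → Circle1)} (hs : MeasurableSet s) :
    Measurable fun x : Fin n → Circle1 => (volume : Measure Circle1) (Fin.snoc (α := fun _ => Circle1) x ⁻¹' s) :=
  measurable_measure_prodMk_left (measurable_snoc_pair hs)

lemma meas_ind {n : ℕ} {s : Set (Fin (n + 1) → Circle1)} (hs : MeasurableSet s) (i : Fin n) :
    Measurable fun x : Fin n → Circle1 =>
      s.indicator (1 : (Fin (n + 1) → Circle1) → ENNReal) (Fin.snoc x (x i) : Fin (n + 1) → Circle1) :=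
  (measurable_one.indicator hs).comp (measurable_snoc_self i)

lemma kernel_measurable (τ : ℝ) {n : ℕ} :
    Measurable (fun x : Fin n → Circle1 =>
      ((urnKernel τ x).map (Fin.snoc (α := fun _ => Circle1) x) : Measure (Fin (n + 1) → Circle1))) := by
  refine Measure.measurable_of_measurable_coe _ fun s hs => ?_
  simp only [kernel_apply τ _ hs]
  have h1 := meas_vol hs
  have h2 := meas_ind hs
  fun_prop

lemma kernel_lintegral (τ : ℝ) {n : ℕ} (P : Finpartition (Finset.univ : Finset (Fin n)))
    {s : Set (Fin (n + 1) → Circle1)} (hs : MeasurableSet s) :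
    ∫⁻ x, (urnKernel τ x).map (Fin.snoc (α := fun _ => Circle1) x) s ∂(lambdaPart volume P)
      = (ENNReal.ofReal ((1 - τ) + n * τ))⁻¹ * (ENNReal.ofReal (1 - τ) *
          lambdaPart volume (extPart P none) s
        + ENNReal.ofReal τ * ∑ B : P.parts,
          B.1.card * lambdaPart volume (extPart P (some B)) s) := by
  simp only [kernel_apply τ _ hs]
  have h1 := meas_vol hs
  have h2 := meas_ind hs
  rw [lintegral_const_mul _ (by fun_prop), lintegral_add_left (by fun_prop),
    lintegral_const_mul _ h1, lintegral_const_mul _ (by fun_prop), lambda_none P hs,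
    lintegral_finsetSum _ (fun i _ => h2 i)]
  congr 3
  have h3 : ∀ i : Fin n, ∫⁻ x, s.indicator (1 : (Fin (n + 1) → Circle1) → ENNReal)
      (Fin.snoc x (x i) : Fin (n + 1) → Circle1) ∂(lambdaPart volume P)
      = lambdaPart volume (extPart P (some (blk P i))) s := by
    intro i
    rw [← lambda_some, ← lintegral_indicator_one hs,
      lintegral_map (measurable_one.indicator hs) (measurable_snoc_self i)]
  simp only [h3]
  rw [← Finset.sum_fiberwise (s := Finset.univ) (g := blk P)]
  refine Finset.sum_congr rfl fun B _ => ?_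
  rw [Finset.sum_congr rfl (g := fun _ => lambdaPart volume (extPart P (some B)) s)]
  · rw [Finset.sum_const, filter_blk, nsmul_eq_mul]
  · intro i hi
    rw [(Finset.mem_filter.1 hi).2]

lemma ewens_nonneg (τ : ℝ) (hτ0 : 0 ≤ τ) (hτ1 : τ ≤ 1) {n : ℕ}
    (P : Finpartition (Finset.univ : Finset (Fin n))) : 0 ≤ ewens τ n P := by
  unfold ewens
  have h : 0 ≤ 1 - τ := by linarith
  refine div_nonneg (by positivity) (Finset.prod_nonneg fun j _ => by positivity)

lemma urn_one (τ : ℝ) : urnMeasure τ 1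
      = ∑ P : Finpartition (Finset.univ : Finset (Fin 1)),
          ENNReal.ofReal (ewens τ 1 P) • lambdaPart volume P := by
  classical
  let P0 : Finpartition (Finset.univ : Finset (Fin 1)) := kerPart (fun _ => ())
  have hP : ∀ P : Finpartition (Finset.univ : Finset (Fin 1)), P = P0 := by
    intro P
    apply finpart_ext
    intro i j
    rw [Subsingleton.elim i j]; simp
  rw [Fintype.sum_eq_single P0 (fun P h => absurd (hP P) h)]
  have hsurj : Function.Surjective (fun _ : Fin 1 => ()) := fun _ => ⟨0, rfl⟩
  have hrel : ∀ i j, blk P0 i = blk P0 j ↔ (fun _ : Fin 1 => ()) i = (fun _ : Fin 1 => ()) j :=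
    fun i j => blk_kerPart _ i j
  obtain ⟨hc, hp⟩ := card_prod_eq P0 _ hsurj hrel
  have hw : ewens τ 1 P0 = 1 := by
    unfold ewens
    rw [hp, hc]
    simp
  rw [hw, lambdaPart_eq P0 _ hsurj hrel, ENNReal.ofReal_one, one_smul, urnMeasure]
  have hu := (measurePreserving_funUnique (volume : Measure Circle1) Unit).map_eq
  conv_lhs => rw [← hu]
  rw [Measure.map_map (by fun_prop) (by fun_prop)]
  rfl

lemma urn_step (τ : ℝ) (hτ0 : 0 ≤ τ) (hτ1 : τ ≤ 1) (n : ℕ) (hn : 1 ≤ n) :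
    (∑ P : Finpartition (Finset.univ : Finset (Fin n)),
          ENNReal.ofReal (ewens τ n P) • lambdaPart volume P).bind
        (fun x => (urnKernel τ x).map (Fin.snoc (α := fun _ => Circle1) x))
      = ∑ P : Finpartition (Finset.univ : Finset (Fin (n + 1))),
          ENNReal.ofReal (ewens τ (n + 1) P) • lambdaPart volume P := by
  ext s hs
  have hc : 0 < (1 - τ) + n * τ := by
    have : (1 : ℝ) ≤ n := by exact_mod_cast hn
    nlinarith
  have h1 : 0 ≤ 1 - τ := by linarith
  rw [Measure.bind_apply hs (kernel_measurable τ).aemeasurable, lintegral_finsetSum_measure,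
    Measure.finsetSum_apply, sum_extPart]
  refine Finset.sum_congr rfl fun P _ => ?_
  have hw := ewens_nonneg τ hτ0 hτ1 P
  simp only [lintegral_smul_measure, kernel_lintegral τ P hs, Measure.smul_apply, smul_eq_mul,
    ewens_none τ hn, ewens_some τ hn]
  have e1 : ENNReal.ofReal (ewens τ n P * (1 - τ) / ((1 - τ) + n * τ))
      = ENNReal.ofReal (ewens τ n P) * (ENNReal.ofReal ((1 - τ) + n * τ))⁻¹
        * ENNReal.ofReal (1 - τ) := by
    rw [ENNReal.ofReal_div_of_pos hc, ENNReal.ofReal_mul hw, div_eq_mul_inv]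
    ring
  have e2 : ∀ k : ℕ, ENNReal.ofReal (ewens τ n P * (τ * k) / ((1 - τ) + n * τ))
      = ENNReal.ofReal (ewens τ n P) * (ENNReal.ofReal ((1 - τ) + n * τ))⁻¹
        * ENNReal.ofReal τ * k := by
    intro k
    rw [ENNReal.ofReal_div_of_pos hc, ENNReal.ofReal_mul hw, ENNReal.ofReal_mul hτ0,
      ENNReal.ofReal_natCast, div_eq_mul_inv]
    ring
  simp only [e1, e2, mul_assoc, ← Finset.mul_sum]
  ring

end UrnHelpers

/-- the urn measure decomposes as the mixture
`m_n = Σ_π p_τ(π) · λ_π` over all partitions `π` of `{1,…,n}`. -/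
theorem urnMeasure_eq_mixture (τ : ℝ) (hτ0 : 0 ≤ τ) (hτ1 : τ ≤ 1)
    (n : ℕ) (hn : 1 ≤ n) :
    urnMeasure τ n
      = ∑ P : Finpartition (Finset.univ : Finset (Fin n)),
          ENNReal.ofReal (ewens τ n P) • lambdaPart volume P := by
  induction n, hn using Nat.le_induction with
  | base => exact urn_one τ
  | succ n hn ih =>
    rw [← urn_step τ hτ0 hτ1 n hn, ← ih]
    obtain ⟨m, rfl⟩ : ∃ m, n = m + 1 := ⟨n - 1, by omega⟩
    rfl

end
end

section
/- Let m be a probability measure on E₁ × E₂ with first marginal m₁, let J : L²(m₁) → L²(m) be the isometry J g = g ∘ Prod.fst, and let π(f) ∈ L²(m₁) be defined by the property that J(π(f)) is the orthogonal projection of f onto the range of J. Let T be a bounded self-adjoint operator on L²(m) and T₁ a bounded self-adjoint operator on L²(m₁) such that T ∘ J = J ∘ T₁. Then for every f ∈ L²(m), ‖f‖² − ‖T f‖² = (‖π(f)‖² − ‖T₁ π(f)‖²) + (‖f − J(π(f))‖² − ‖T(f − J(π(f)))‖²). -/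
open MeasureTheory

noncomputable section

/-- let `m` be a probability measure on `E₁ × E₂` with first marginal
`m₁ = m.map Prod.fst`, `J : L²(m₁) → L²(m)` the isometry `J g = g ∘ Prod.fst`, and for
`f ∈ L²(m)` let `π(f) = pf` be characterized by: `J pf` is the orthogonal projection of
`f` onto the range of `J` (i.e. `f - J pf ⟂ range J`).  If `T`, `T₁` are bounded
self-adjoint operators on `L²(m)`, `L²(m₁)` with `T ∘ J = J ∘ T₁`, then
`‖f‖² − ‖T f‖² = (‖pf‖² − ‖T₁ pf‖²) + (‖f − J pf‖² − ‖T(f − J pf)‖²)`. -/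
theorem norm_energy_decomposition
    {E₁ E₂ : Type*} [MeasurableSpace E₁] [MeasurableSpace E₂]
    (m : Measure (E₁ × E₂)) [IsProbabilityMeasure m]
    (J : Lp ℝ 2 (m.map Prod.fst) →L[ℝ] Lp ℝ 2 m)
    (hJ : ∀ g : Lp ℝ 2 (m.map Prod.fst), (J g : E₁ × E₂ → ℝ) =ᵐ[m] fun p => g p.1)
    (T : Lp ℝ 2 m →L[ℝ] Lp ℝ 2 m)
    (T₁ : Lp ℝ 2 (m.map Prod.fst) →L[ℝ] Lp ℝ 2 (m.map Prod.fst))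
    (hT : ∀ u v : Lp ℝ 2 m, (inner ℝ (T u) v : ℝ) = inner ℝ u (T v))
    (hT₁ : ∀ u v : Lp ℝ 2 (m.map Prod.fst), (inner ℝ (T₁ u) v : ℝ) = inner ℝ u (T₁ v))
    (hTJ : ∀ g, T (J g) = J (T₁ g))
    (f : Lp ℝ 2 m) (pf : Lp ℝ 2 (m.map Prod.fst))
    (hpf : ∀ g : Lp ℝ 2 (m.map Prod.fst), (inner ℝ (f - J pf) (J g) : ℝ) = 0) :
    ‖f‖ ^ 2 - ‖T f‖ ^ 2
      = (‖pf‖ ^ 2 - ‖T₁ pf‖ ^ 2) + (‖f - J pf‖ ^ 2 - ‖T (f - J pf)‖ ^ 2) := by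
  have hn : ∀ g : Lp ℝ 2 (m.map Prod.fst), ‖J g‖ = ‖g‖ := by
    intro g
    rw [Lp.norm_def, Lp.norm_def, eLpNorm_congr_ae (hJ g)]
    congr 1
    exact (eLpNorm_map_measure (Lp.aestronglyMeasurable g)
      measurable_fst.aemeasurable).symm
  obtain ⟨h, rfl⟩ : ∃ h, f = h + J pf := ⟨f - J pf, by abel⟩
  have e : h + J pf - J pf = h := by abel
  rw [e] at hpf ⊢
  have h2 : (inner ℝ (T h) (T (J pf)) : ℝ) = 0 := by
    rw [hT, hTJ, hTJ]
    exact hpf _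
  rw [map_add, norm_add_sq_real, norm_add_sq_real, hpf, h2, hTJ, hn, hn]
  ring

end
end

section
/- Let m be a probability measure on E₁ × E₂ with first marginal m₁, J : L²(m₁) → L²(m) the isometry J g = g ∘ Prod.fst, and π the associated conditional-expectation map. Let (P_t)_{t≥0} and (P¹_t)_{t≥0} be self-adjoint contraction semigroups on L²(m) and L²(m₁) respectively, satisfying the intertwining relation P_t ∘ J = J ∘ P¹_t for all t ≥ 0. Let ℰ and ℰ₁ be their energy forms. Then for every f ∈ L²(m), ℰ(f) = ℰ₁(π(f)) + ℰ(f − J(π(f))) as an identity in [0,∞]; in particular ℰ₁(π(f)) ≤ ℰ(f). -/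
open MeasureTheory

noncomputable section

/-- The energy form of a semigroup `(P_t)_{t≥0}` on a real Hilbert space:
`ℰ(f) = ⨆_{t>0} ENNReal.ofReal (t⁻¹ (‖f‖² − ⟨P_t f, f⟩)) ∈ [0,∞]`. -/
def energyForm {H : Type*} [NormedAddCommGroup H] [InnerProductSpace ℝ H]
    (P : ℝ → H →L[ℝ] H) (f : H) : ENNReal :=
  ⨆ (t : ℝ) (_ : 0 < t), ENNReal.ofReal (t⁻¹ * (‖f‖ ^ 2 - (inner ℝ (P t f) f : ℝ)))

open Filter Topology in
theorem energyForm_tendsto {H : Type*} [NormedAddCommGroup H] [InnerProductSpace ℝ H]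
    (P : ℝ → H →L[ℝ] H)
    (hP0 : P 0 = ContinuousLinearMap.id ℝ _)
    (hPadd : ∀ s t : ℝ, 0 ≤ s → 0 ≤ t → P (s + t) = (P s).comp (P t))
    (hPsa : ∀ t : ℝ, 0 ≤ t → ∀ u v, (inner ℝ (P t u) v : ℝ) = inner ℝ u (P t v))
    (hPcontr : ∀ t : ℝ, 0 ≤ t → ‖P t‖ ≤ 1) (f : H) :
    (∀ t : ℝ, 0 < t → 0 ≤ t⁻¹ * (‖f‖ ^ 2 - (inner ℝ (P t f) f : ℝ))) ∧
    Tendsto (fun t : ℝ => ENNReal.ofReal (t⁻¹ * (‖f‖ ^ 2 - (inner ℝ (P t f) f : ℝ))))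
      (𝓝[>] 0) (𝓝 (energyForm P f)) := by
  have hle : ∀ t : ℝ, 0 ≤ t → ∀ u, ‖P t u‖ ≤ ‖u‖ := fun t ht u => by
    simpa using (P t).le_of_opNorm_le (hPcontr t ht) u
  have hsplit : ∀ s t : ℝ, 0 ≤ s → 0 ≤ t →
      (inner ℝ (P (s + t) f) f : ℝ) = inner ℝ (P t f) (P s f) := fun s t hs ht => by
    rw [hPadd s t hs ht, ContinuousLinearMap.comp_apply, hPsa s hs]
  have hnn : ∀ t : ℝ, 0 ≤ t → 0 ≤ ‖f‖ ^ 2 - (inner ℝ (P t f) f : ℝ) := fun t ht => by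
    have h1 := real_inner_le_norm (P t f) f
    have h2 := hle t ht f
    nlinarith [norm_nonneg f]
  have hsq : ∀ t : ℝ, 0 ≤ t → (inner ℝ (P t f) f : ℝ) = ‖P (t / 2) f‖ ^ 2 := fun t ht => by
    have := hsplit (t / 2) (t / 2) (by positivity) (by positivity)
    rw [add_halves] at this
    rw [this, real_inner_self_eq_norm_sq]
  have hmono : ∀ s t : ℝ, 0 ≤ s → s ≤ t →
      (inner ℝ (P t f) f : ℝ) ≤ inner ℝ (P s f) f := fun s t hs hst => by
    rw [hsq s hs, hsq t (hs.trans hst)]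
    have : P (t / 2) f = P ((t - s) / 2) (P (s / 2) f) := by
      rw [← ContinuousLinearMap.comp_apply, ← hPadd _ _ (by linarith) (by linarith)]
      congr 2
      ring
    rw [this]
    have := hle ((t - s) / 2) (by linarith) (P (s / 2) f)
    gcongr
  have hconv : ∀ a r : ℝ, 0 ≤ a → 0 ≤ r →
      2 * (inner ℝ (P (a + r) f) f : ℝ) ≤ inner ℝ (P a f) f + inner ℝ (P (a + 2 * r) f) f := by
    intro a r ha hr
    have e1 := hsplit (a / 2) (a / 2 + r) (by linarith) (by linarith)
    have h1 := hsq a ha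
    have h2 := hsq (a + 2 * r) (by linarith)
    rw [show a / 2 + (a / 2 + r) = a + r by ring] at e1
    rw [show (a + 2 * r) / 2 = a / 2 + r by ring] at h2
    rw [e1, h1, h2]
    have := norm_sub_sq_real (P (a / 2 + r) f) (P (a / 2) f)
    nlinarith [sq_nonneg ‖P (a / 2 + r) f - P (a / 2) f‖]
  have hf0 : (inner ℝ (P 0 f) f : ℝ) = ‖f‖ ^ 2 := by
    rw [hP0]; simp
  have hinc : ∀ r : ℝ, 0 ≤ r → ∀ k : ℕ,
      (inner ℝ (P (k * r) f) f : ℝ) - inner ℝ (P ((k + 1 : ℕ) * r) f) f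
        ≤ ‖f‖ ^ 2 - inner ℝ (P r f) f := by
    intro r hr k
    induction k with
    | zero => simp [hf0]
    | succ k ih =>
      have := hconv (k * r) r (by positivity) hr
      rw [show (k : ℝ) * r + r = ((k + 1 : ℕ) : ℝ) * r by push_cast; ring,
        show (k : ℝ) * r + 2 * r = ((k + 1 + 1 : ℕ) : ℝ) * r by push_cast; ring] at this
      linarith
  have hsum : ∀ r : ℝ, 0 ≤ r → ∀ k : ℕ,
      ‖f‖ ^ 2 - (inner ℝ (P (k * r) f) f : ℝ) ≤ k * (‖f‖ ^ 2 - inner ℝ (P r f) f) := by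
    intro r hr k
    induction k with
    | zero => simp [hf0]
    | succ k ih =>
      have := hinc r hr k
      have e : ((k + 1 : ℕ) : ℝ) = k + 1 := by push_cast; ring
      rw [e] at this ⊢
      linarith
  have hA : ∀ t : ℝ, 0 < t → 0 ≤ t⁻¹ * (‖f‖ ^ 2 - (inner ℝ (P t f) f : ℝ)) := fun t ht =>
    mul_nonneg (by positivity) (hnn t ht.le)
  have hkey : ∀ s r : ℝ, 0 < s → 0 < r →
      (s + r)⁻¹ * (‖f‖ ^ 2 - (inner ℝ (P s f) f : ℝ))
        ≤ r⁻¹ * (‖f‖ ^ 2 - (inner ℝ (P r f) f : ℝ)) := by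
    intro s r hs hr
    have h1 : s ≤ (⌈s / r⌉₊ : ℝ) * r := by
      rw [← div_le_iff₀ hr]; exact Nat.le_ceil _
    have h2 : (⌈s / r⌉₊ : ℝ) * r ≤ s + r := by
      have := (Nat.ceil_lt_add_one (show 0 ≤ s / r by positivity)).le
      calc _ ≤ (s / r + 1) * r := by gcongr
        _ = s + r := by field_simp
    have h3 := hsum r hr.le ⌈s / r⌉₊
    have h4 := hmono s _ hs.le h1
    rw [inv_mul_le_iff₀ (by positivity)]
    calc _ ≤ (⌈s / r⌉₊ : ℝ) * (‖f‖ ^ 2 - inner ℝ (P r f) f) := by linarith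
      _ = ((⌈s / r⌉₊ : ℝ) * r) * (r⁻¹ * (‖f‖ ^ 2 - inner ℝ (P r f) f)) := by
        field_simp
      _ ≤ _ := mul_le_mul_of_nonneg_right h2 (hA r hr)
  refine ⟨hA, tendsto_order.2 ⟨fun a ha => ?_, fun a ha => ?_⟩⟩
  · unfold energyForm at ha
    simp only [lt_iSup_iff] at ha
    obtain ⟨s, hs, has⟩ := ha
    have hc : Tendsto (fun r : ℝ =>
        ENNReal.ofReal ((s + r)⁻¹ * (‖f‖ ^ 2 - (inner ℝ (P s f) f : ℝ)))) (𝓝[>] 0)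
        (𝓝 (ENNReal.ofReal (s⁻¹ * (‖f‖ ^ 2 - (inner ℝ (P s f) f : ℝ))))) := by
      apply ENNReal.tendsto_ofReal
      apply Tendsto.mul_const
      apply Tendsto.inv₀ _ hs.ne'
      have : Tendsto (fun r : ℝ => s + r) (𝓝 0) (𝓝 (s + 0)) :=
        (continuous_const.add continuous_id).tendsto 0
      rw [add_zero] at this
      exact this.mono_left nhdsWithin_le_nhds
    filter_upwards [hc.eventually (lt_mem_nhds has), self_mem_nhdsWithin] with r h1 h2
    exact h1.trans_le (ENNReal.ofReal_le_ofReal (hkey s r hs h2))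
  · filter_upwards [self_mem_nhdsWithin] with r hr
    refine lt_of_le_of_lt ?_ ha
    exact le_iSup₂ (f := fun (t : ℝ) (_ : 0 < t) =>
      ENNReal.ofReal (t⁻¹ * (‖f‖ ^ 2 - (inner ℝ (P t f) f : ℝ)))) r hr

/-- let `m` be a probability measure on `E₁ × E₂` with first marginal
`m₁ = m.map Prod.fst`, `J : L²(m₁) → L²(m)` the isometry `J g = g ∘ Prod.fst`, and for
`f ∈ L²(m)` let `π(f) = pf` be characterized by `f − J pf ⟂ range J`.  If `(P_t)` and
`(P¹_t)` are self-adjoint contraction semigroups on `L²(m)`, `L²(m₁)` intertwined by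
`J` (`P_t ∘ J = J ∘ P¹_t`), with energy forms `ℰ`, `ℰ₁`, then
`ℰ(f) = ℰ₁(π(f)) + ℰ(f − J(π(f)))` in `[0,∞]`; in particular `ℰ₁(π(f)) ≤ ℰ(f)`. -/
theorem energyForm_decomposition
    {E₁ E₂ : Type*} [MeasurableSpace E₁] [MeasurableSpace E₂]
    (m : Measure (E₁ × E₂)) [IsProbabilityMeasure m]
    (J : Lp ℝ 2 (m.map Prod.fst) →L[ℝ] Lp ℝ 2 m)
    (hJ : ∀ g : Lp ℝ 2 (m.map Prod.fst), (J g : E₁ × E₂ → ℝ) =ᵐ[m] fun p => g p.1)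
    (P : ℝ → Lp ℝ 2 m →L[ℝ] Lp ℝ 2 m)
    (P₁ : ℝ → Lp ℝ 2 (m.map Prod.fst) →L[ℝ] Lp ℝ 2 (m.map Prod.fst))
    (hP0 : P 0 = ContinuousLinearMap.id ℝ _)
    (hPadd : ∀ s t : ℝ, 0 ≤ s → 0 ≤ t → P (s + t) = (P s).comp (P t))
    (hPsa : ∀ t : ℝ, 0 ≤ t → ∀ u v, (inner ℝ (P t u) v : ℝ) = inner ℝ u (P t v))
    (hPcontr : ∀ t : ℝ, 0 ≤ t → ‖P t‖ ≤ 1)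
    (hP₁0 : P₁ 0 = ContinuousLinearMap.id ℝ _)
    (hP₁add : ∀ s t : ℝ, 0 ≤ s → 0 ≤ t → P₁ (s + t) = (P₁ s).comp (P₁ t))
    (hP₁sa : ∀ t : ℝ, 0 ≤ t → ∀ u v, (inner ℝ (P₁ t u) v : ℝ) = inner ℝ u (P₁ t v))
    (hP₁contr : ∀ t : ℝ, 0 ≤ t → ‖P₁ t‖ ≤ 1)
    (hint : ∀ t : ℝ, 0 ≤ t → ∀ g, P t (J g) = J (P₁ t g))
    (f : Lp ℝ 2 m) (pf : Lp ℝ 2 (m.map Prod.fst))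
    (hpf : ∀ g : Lp ℝ 2 (m.map Prod.fst), (inner ℝ (f - J pf) (J g) : ℝ) = 0) :
    energyForm P f = energyForm P₁ pf + energyForm P (f - J pf)
      ∧ energyForm P₁ pf ≤ energyForm P f := by
  have hiso : ∀ a b, (inner ℝ (J a) (J b) : ℝ) = inner ℝ a b := by
    intro a b
    rw [L2.inner_def, L2.inner_def, integral_map measurable_fst.aemeasurable]
    · apply integral_congr_ae
      filter_upwards [hJ a, hJ b] with x h1 h2
      rw [h1, h2]
    · exact (Lp.aestronglyMeasurable a).inner (Lp.aestronglyMeasurable b)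
  obtain ⟨-, t0⟩ := energyForm_tendsto P hP0 hPadd hPsa hPcontr f
  obtain ⟨n1, t1⟩ := energyForm_tendsto P₁ hP₁0 hP₁add hP₁sa hP₁contr pf
  obtain ⟨n2, t2⟩ := energyForm_tendsto P hP0 hPadd hPsa hPcontr (f - J pf)
  have key : energyForm P f = energyForm P₁ pf + energyForm P (f - J pf) := by
    refine tendsto_nhds_unique t0 ((t1.add t2).congr' ?_)
    filter_upwards [self_mem_nhdsWithin] with t ht
    have ht' : (0 : ℝ) < t := ht
    rw [← ENNReal.ofReal_add (n1 t ht) (n2 t ht), ← mul_add]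
    congr 2
    obtain ⟨g, hg⟩ : ∃ g, g = f - J pf := ⟨_, rfl⟩
    have hf : f = J pf + g := by rw [hg]; abel
    rw [← hg] at hpf ⊢
    rw [hf, ← real_inner_self_eq_norm_sq, ← real_inner_self_eq_norm_sq,
      ← real_inner_self_eq_norm_sq, map_add]
    simp only [inner_add_left, inner_add_right]
    rw [hPsa t ht'.le g (J pf), hint t ht'.le, hpf, hpf, real_inner_comm g (J pf), hpf,
      real_inner_comm g (J (P₁ t pf)), hpf, hiso, hiso]
    ring
  exact ⟨key, key ▸ le_self_add⟩

end
end
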